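/- arXiv:0904.1237 — 3 statements merged into one kernel-verified Lean document; each statement's English description precedes it below -/
import Mathlib

section
/- Let h be a positive harmonic function on the open unit disc D ⊂ ℂ, and let λ ∈ D. Suppose the directional derivative of h at the origin in the direction of λ vanishes, i.e. the real Fréchet derivative of h at 0 applied to the vector λ is zero. Then h satisfies the following strengthened Harnack inequality: ((1−|λ|²)/(1+|λ|²))·h(λ) ≤ h(0) ≤ ((1+|λ|²)/(1−|λ|²))·h(λ). -/
/-- A function `h : ℂ → ℝ` is harmonic on an open set `U` if it is twice continuously
differentiable there (viewing `ℂ` as `ℝ²`) and its Laplacian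
`∂²h/∂x² + ∂²h/∂y²` vanishes on `U`. -/
def HarmonicOnSet (h : ℂ → ℝ) (U : Set ℂ) : Prop :=
  ContDiffOn ℝ 2 h U ∧
    ∀ z ∈ U,
      fderiv ℝ (fun w => fderiv ℝ h w 1) z 1 +
        fderiv ℝ (fun w => fderiv ℝ h w Complex.I) z Complex.I = 0

/-!
Let `h` be harmonic on a neighbourhood of the closed disc of radius `R` about `0`, and write
`A = R² + |w|²`, `D = R² - |w|²`. On the circle `|z| = R` the Poisson kernel at `w` is
`P = D / (A - 2s)` with `s = ⟪w, z⟫`, and `A² - D² = 4R²|w|² ≥ 4s²`, so `D² ≤ A² - 4s² ≤ A²`.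
Dividing by `A (A - 2s)` sandwiches the affine function `1 + 2s / A` between `(D / A) P` and
`(A / D) P`. Now average against `h ≥ 0` over the circle: the kernel gives `h w`, and the affine
function gives `h 0 + (R² / A) h'(0) w`, because the average of `⟪v, z⟫ h z` is `(R² / 2) h'(0) v`.
A harmonic function on the open disc is handled by letting the radius increase to that of the disc.
-/

open Complex InnerProductSpace Metric Real Set
open scoped ComplexConjugate

theorem HarmonicOnSet.harmonicOnNhd {h : ℂ → ℝ} {U : Set ℂ} (hh : HarmonicOnSet h U)
    (hU : IsOpen U) : HarmonicOnNhd h U := by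
  have hC2 {z : ℂ} (hz : z ∈ U) : ContDiffAt ℝ 2 h z := hh.1.contDiffAt (hU.mem_nhds hz)
  refine fun x hx ↦ ⟨hC2 hx, ?_⟩
  filter_upwards [hU.mem_nhds hx] with z hz
  have hdiff : DifferentiableAt ℝ (fderiv ℝ h) z :=
    ((hC2 hz).fderiv_right (m := 1) (by norm_num)).differentiableAt one_ne_zero
  have second_fderiv (v : ℂ) :
      fderiv ℝ (fun w ↦ fderiv ℝ h w v) z v = fderiv ℝ (fderiv ℝ h) z v v := by
    simp [fderiv_clm_apply hdiff (differentiableAt_const v)]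
  simpa [laplacian_eq_iteratedFDeriv_complexPlane, iteratedFDeriv_two_apply, second_fderiv]
    using hh.2 z hz

section FirstMoments

variable {E : Type*} [NormedAddCommGroup E] [NormedSpace ℂ E] [CompleteSpace E]
  {f : ℂ → E} {c : ℂ} {R : ℝ}

theorem circleAverage_sub_smul_eq_zero (hf : DiffContOnCl ℂ f (ball c |R|)) :
    circleAverage (fun z ↦ (z - c) • f z) c R = 0 := by
  have hsub : DiffContOnCl ℂ (fun z ↦ z - c) (ball c |R|) :=
    (differentiable_id.sub_const c).diffContOnCl
  simpa using (hsub.smul hf).circleAverage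

theorem circleAverage_inv_sub_smul_eq_deriv (hR : 0 < R) (hf : DiffContOnCl ℂ f (ball c R)) :
    circleAverage (fun z ↦ (z - c)⁻¹ • f z) c R = deriv f c := by
  rw [circleAverage_eq_circleIntegral hR.ne', inv_smul_eq_iff₀ two_pi_I_ne_zero,
    ← hf.deriv_eq_smul_circleIntegral hR]
  simp only [smul_smul, one_div, pow_two, mul_inv]

theorem circleAverage_inner_smul_eq_deriv (hR : 0 < R) (hf : DiffContOnCl ℂ f (ball c R)) (v : ℂ) :
    circleAverage (fun z ↦ ⟪v, z - c⟫_ℝ • f z) c R = (R ^ 2 / 2 : ℝ) • v • deriv f c := by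
  have hfc : ContinuousOn f (sphere c |R|) := by
    rw [abs_of_pos hR]
    exact hf.continuousOn_ball.mono sphere_subset_closedBall
  have hne : ∀ z ∈ sphere c |R|, z - c ≠ 0 := fun z hz ↦
    sub_ne_zero.2 (ne_of_mem_sphere hz (abs_pos.2 hR.ne').ne')
  have int_sub : CircleIntegrable (fun z ↦ (conj v / 2) • (z - c) • f z) c R :=
    ContinuousOn.circleIntegrable' (by fun_prop)
  have int_inv : CircleIntegrable (fun z ↦ (R ^ 2 * v / 2) • (z - c)⁻¹ • f z) c R :=
    ContinuousOn.circleIntegrable' (by fun_prop (disch := exact hne))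
  -- `conj (z - c) = R² / (z - c)` on the circle, so the inner product is a Laurent polynomial.
  have inner_eq : ∀ z ∈ sphere c |R|,
      (⟪v, z - c⟫_ℝ : ℂ) = conj v / 2 * (z - c) + R ^ 2 * v / 2 * (z - c)⁻¹ := by
    intro z hz
    have hnorm : (z - c) * conj (z - c) = R ^ 2 := by
      rw [mul_conj', mem_sphere_iff_norm.1 hz, ← ofReal_pow, sq_abs, ofReal_pow]
    have hconj : R ^ 2 * v / 2 * (z - c)⁻¹ = v * conj (z - c) / 2 := by
      rw [← hnorm]
      field_simp [hne z hz]
    rw [hconj, Complex.inner, re_eq_add_conj, map_mul, conj_conj]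
    ring
  calc circleAverage (fun z ↦ ⟪v, z - c⟫_ℝ • f z) c R
    _ = circleAverage (fun z ↦ (conj v / 2) • (z - c) • f z
          + (R ^ 2 * v / 2) • (z - c)⁻¹ • f z) c R :=
        circleAverage_congr_sphere fun z hz ↦ by
          simp only [← coe_smul, inner_eq z hz, add_smul, smul_smul]
    _ = (R ^ 2 * v / 2) • deriv f c := by
        rw [circleAverage_fun_add int_sub int_inv, circleAverage_fun_smul, circleAverage_fun_smul,
          circleAverage_sub_smul_eq_zero (by rwa [abs_of_pos hR]),
          circleAverage_inv_sub_smul_eq_deriv hR hf, smul_zero, zero_add]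
    _ = (R ^ 2 / 2 : ℝ) • v • deriv f c := by
        rw [← coe_smul, smul_smul]
        push_cast
        ring_nf

end FirstMoments

section Harmonic

variable {h : ℂ → ℝ} {c w : ℂ} {R : ℝ}

theorem exists_analyticOnNhd_closedBall_re_eq (hR : 0 ≤ R)
    (hh : HarmonicOnNhd h (closedBall c R)) :
    ∃ F : ℂ → ℂ, AnalyticOnNhd ℂ F (closedBall c R) ∧
      EqOn (fun z ↦ (F z).re) h (closedBall c R) := by
  obtain ⟨δ, hδ, hsub⟩ := (isCompact_closedBall c R).exists_thickening_subset_open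
    (isOpen_setOfPred_harmonicAt h) hh
  rw [thickening_closedBall hδ hR] at hsub
  obtain ⟨F, hF, hre⟩ := HarmonicOnNhd.exists_analyticOnNhd_ball_re_eq hsub
  have hball : closedBall c R ⊆ ball c (δ + R) := closedBall_subset_ball (by linarith)
  exact ⟨F, hF.mono hball, hre.mono hball⟩

theorem circleAverage_inner_mul_eq_fderiv (hR : 0 < R) (hh : HarmonicOnNhd h (closedBall c R))
    (v : ℂ) :
    circleAverage (fun z ↦ ⟪v, z - c⟫_ℝ * h z) c R = R ^ 2 / 2 * fderiv ℝ h c v := by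
  obtain ⟨F, hF, hre⟩ := exists_analyticOnNhd_closedBall_re_eq hR.le hh
  have hFcl : DiffContOnCl ℂ F (ball c R) := hF.differentiableOn.diffContOnCl_ball subset_rfl
  have hsphere : sphere c |R| ⊆ closedBall c R := by
    rw [abs_of_pos hR]
    exact sphere_subset_closedBall
  have hint : CircleIntegrable (fun z ↦ ⟪v, z - c⟫_ℝ • F z) c R := by
    have := hF.continuousOn.mono hsphere
    exact ContinuousOn.circleIntegrable' (by fun_prop)
  have hderiv : fderiv ℝ h c v = (v * deriv F c).re := by
    have hF' := (hF c (mem_closedBall_self hR.le)).differentiableAt.hasDerivAt.hasFDerivAt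
    have hh' := (reCLM.hasFDerivAt.comp c (hF'.restrictScalars ℝ)).congr_of_eventuallyEq
      (hre.symm.eventuallyEq_of_mem (closedBall_mem_nhds c hR))
    simp [hh'.fderiv]
  calc circleAverage (fun z ↦ ⟪v, z - c⟫_ℝ * h z) c R
    _ = circleAverage (reCLM ∘ fun z ↦ ⟪v, z - c⟫_ℝ • F z) c R :=
        circleAverage_congr_sphere fun z hz ↦ by simp [← hre (hsphere hz)]
    _ = ((R ^ 2 / 2 : ℝ) • v • deriv F c).re := by
        rw [reCLM.circleAverage_comp_comm hint, circleAverage_inner_smul_eq_deriv hR hFcl,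
          reCLM_apply]
    _ = R ^ 2 / 2 * fderiv ℝ h c v := by
        rw [hderiv, smul_re, smul_eq_mul, smul_eq_mul]

theorem circleAverage_one_add_inner_mul_eq (hR : 0 < R) (hh : HarmonicOnNhd h (closedBall c R))
    (v : ℂ) :
    circleAverage (fun z ↦ (1 + ⟪v, z - c⟫_ℝ) * h z) c R = h c + R ^ 2 / 2 * fderiv ℝ h c v := by
  rw [← abs_of_pos hR] at hh
  have hcont : ContinuousOn h (sphere c |R|) := hh.continuousOn.mono sphere_subset_closedBall
  have hinner : CircleIntegrable (fun z ↦ ⟪v, z - c⟫_ℝ * h z) c R :=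
    ContinuousOn.circleIntegrable' (by fun_prop)
  simp only [one_add_mul]
  rw [circleAverage_fun_add hcont.circleIntegrable' hinner,
    InnerProductSpace.HarmonicOnNhd.circleAverage_eq hh,
    circleAverage_inner_mul_eq_fderiv hR (by rwa [abs_of_pos hR] at hh)]

theorem circleIntegrable_poissonKernel_mul (hw : w ∈ ball c R)
    (hh : ContinuousOn h (sphere c |R|)) :
    CircleIntegrable (fun z ↦ poissonKernel c w z * h z) c R := by
  rw [poissonKernel_eq_re_herglotzRieszKernel]
  exact ((continuous_re.comp_continuousOn (continuousOn_herglotzRieszKernel_sphere hw)).mul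
    hh).circleIntegrable'

theorem one_add_inner_mem_Icc_poissonKernel {z : ℂ} (hz : z ∈ sphere c R) (hw : w ∈ ball c R) :
    1 + 2 / (R ^ 2 + ‖w - c‖ ^ 2) * ⟪w - c, z - c⟫_ℝ ∈
      Icc ((R ^ 2 - ‖w - c‖ ^ 2) / (R ^ 2 + ‖w - c‖ ^ 2) * poissonKernel c w z)
        ((R ^ 2 + ‖w - c‖ ^ 2) / (R ^ 2 - ‖w - c‖ ^ 2) * poissonKernel c w z) := by
  obtain rfl : ‖z - c‖ = R := mem_sphere_iff_norm.1 hz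
  have hwz : ‖w - c‖ < ‖z - c‖ := mem_ball_iff_norm.1 hw
  have hD : 0 < ‖z - c‖ ^ 2 - ‖w - c‖ ^ 2 :=
    sub_pos.2 (pow_lt_pow_left₀ hwz (norm_nonneg _) two_ne_zero)
  have hA : 0 < ‖z - c‖ ^ 2 + ‖w - c‖ ^ 2 := by linarith [sq_nonneg ‖w - c‖]
  have hnorm : ‖z - c - (w - c)‖ ^ 2 =
      ‖z - c‖ ^ 2 + ‖w - c‖ ^ 2 - 2 * ⟪w - c, z - c⟫_ℝ := by
    rw [norm_sub_sq_real, real_inner_comm]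
    ring
  have hden : 0 < ‖z - c‖ ^ 2 + ‖w - c‖ ^ 2 - 2 * ⟪w - c, z - c⟫_ℝ :=
    hnorm ▸ pow_pos (norm_sub_pos_iff.2 (ne_of_apply_ne norm hwz.ne')) 2
  have cauchy_schwarz : ⟪w - c, z - c⟫_ℝ ^ 2 ≤ (‖w - c‖ * ‖z - c‖) ^ 2 :=
    sq_le_sq' (neg_le_of_abs_le (abs_real_inner_le_norm _ _)) (real_inner_le_norm _ _)
  rw [poissonKernel_def, hnorm]
  constructor
  · rw [div_mul_div_comm, div_le_iff₀ (mul_pos hA hden)]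
    field_simp
    linarith
  · rw [div_mul_div_cancel₀ hD.ne', le_div_iff₀ hden]
    field_simp
    linarith [sq_nonneg ⟪w - c, z - c⟫_ℝ]

theorem symmetric_harnack_closedBall (hh : HarmonicOnNhd h (closedBall c R))
    (hnonneg : ∀ z ∈ sphere c R, 0 ≤ h z) (hw : w ∈ ball c R) :
    (R ^ 2 - ‖w - c‖ ^ 2) / (R ^ 2 + ‖w - c‖ ^ 2) * h w ≤
        h c + R ^ 2 / (R ^ 2 + ‖w - c‖ ^ 2) * fderiv ℝ h c (w - c) ∧
      h c + R ^ 2 / (R ^ 2 + ‖w - c‖ ^ 2) * fderiv ℝ h c (w - c) ≤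
        (R ^ 2 + ‖w - c‖ ^ 2) / (R ^ 2 - ‖w - c‖ ^ 2) * h w := by
  have hR : 0 < R := pos_of_mem_ball hw
  have hcont : ContinuousOn h (sphere c |R|) := by
    rw [abs_of_pos hR]
    exact hh.continuousOn.mono sphere_subset_closedBall
  have poisson (a : ℝ) : circleAverage (fun z ↦ a * poissonKernel c w z * h z) c R = a * h w := by
    simp only [mul_assoc, ← hh.circleAverage_poissonKernel_smul hw]
    exact circleAverage_smul (a := a) (f := poissonKernel c w • h)
  have poisson_integrable (a : ℝ) :
      CircleIntegrable (fun z ↦ a * poissonKernel c w z * h z) c R := by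
    simp only [mul_assoc]
    exact (circleIntegrable_poissonKernel_mul hw hcont).const_smul
  have affine : circleAverage
      (fun z ↦ (1 + 2 / (R ^ 2 + ‖w - c‖ ^ 2) * ⟪w - c, z - c⟫_ℝ) * h z) c R =
        h c + R ^ 2 / (R ^ 2 + ‖w - c‖ ^ 2) * fderiv ℝ h c (w - c) := by
    simp only [← real_inner_smul_left]
    rw [circleAverage_one_add_inner_mul_eq hR hh, map_smul, smul_eq_mul]
    ring
  have affine_integrable : CircleIntegrable
      (fun z ↦ (1 + 2 / (R ^ 2 + ‖w - c‖ ^ 2) * ⟪w - c, z - c⟫_ℝ) * h z) c R :=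
    ContinuousOn.circleIntegrable' (by fun_prop)
  rw [← affine, ← poisson, ← poisson]
  constructor
  · refine circleAverage_mono (poisson_integrable _) affine_integrable fun z hz ↦ ?_
    rw [abs_of_pos hR] at hz
    exact mul_le_mul_of_nonneg_right (one_add_inner_mem_Icc_poissonKernel hz hw).1 (hnonneg z hz)
  · refine circleAverage_mono affine_integrable (poisson_integrable _) fun z hz ↦ ?_
    rw [abs_of_pos hR] at hz
    exact mul_le_mul_of_nonneg_right (one_add_inner_mem_Icc_poissonKernel hz hw).2 (hnonneg z hz)

end Harmonic

theorem symmetric_harnack_general {h : ℂ → ℝ} {c w : ℂ} {R : ℝ} (hh : HarmonicOnNhd h (ball c R))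
    (hnonneg : ∀ z ∈ ball c R, 0 ≤ h z) (hw : w ∈ ball c R) :
    (R ^ 2 - ‖w - c‖ ^ 2) / (R ^ 2 + ‖w - c‖ ^ 2) * h w ≤
        h c + R ^ 2 / (R ^ 2 + ‖w - c‖ ^ 2) * fderiv ℝ h c (w - c) ∧
      h c + R ^ 2 / (R ^ 2 + ‖w - c‖ ^ 2) * fderiv ℝ h c (w - c) ≤
        (R ^ 2 + ‖w - c‖ ^ 2) / (R ^ 2 - ‖w - c‖ ^ 2) * h w := by
  have hwR : ‖w - c‖ < R := mem_ball_iff_norm.1 hw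
  have hD : R ^ 2 - ‖w - c‖ ^ 2 ≠ 0 :=
    (sub_pos.2 (pow_lt_pow_left₀ hwR (norm_nonneg _) two_ne_zero)).ne'
  have hA : R ^ 2 + ‖w - c‖ ^ 2 ≠ 0 := by
    have := pos_of_mem_ball hw
    positivity
  have hlower : ContinuousAt (fun r ↦ (r ^ 2 - ‖w - c‖ ^ 2) / (r ^ 2 + ‖w - c‖ ^ 2) * h w) R := by
    fun_prop (disch := assumption)
  have hmiddle : ContinuousAt
      (fun r ↦ h c + r ^ 2 / (r ^ 2 + ‖w - c‖ ^ 2) * fderiv ℝ h c (w - c)) R := by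
    fun_prop (disch := assumption)
  have hupper : ContinuousAt (fun r ↦ (r ^ 2 + ‖w - c‖ ^ 2) / (r ^ 2 - ‖w - c‖ ^ 2) * h w) R := by
    fun_prop (disch := assumption)
  have hR : R ∈ closure (Ioo ‖w - c‖ R) := by
    rw [closure_Ioo hwR.ne]
    exact right_mem_Icc.2 hwR.le
  have harnack_lt (r : ℝ) (hr : r ∈ Ioo ‖w - c‖ R) :=
    have hsub : closedBall c r ⊆ ball c R := closedBall_subset_ball hr.2
    symmetric_harnack_closedBall (hh.mono hsub)
      (fun z hz ↦ hnonneg z (hsub (sphere_subset_closedBall hz))) (mem_ball_iff_norm.2 hr.1)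
  exact ⟨hlower.continuousWithinAt.closure_le hR hmiddle.continuousWithinAt
      fun r hr ↦ (harnack_lt r hr).1,
    hmiddle.continuousWithinAt.closure_le hR hupper.continuousWithinAt
      fun r hr ↦ (harnack_lt r hr).2⟩

/-- **Symmetric Harnack inequality.** If `h` is a positive harmonic function on the unit
disc whose directional derivative at the origin in the direction `λ` vanishes, then
`((1−|λ|²)/(1+|λ|²)) h(λ) ≤ h(0) ≤ ((1+|λ|²)/(1−|λ|²)) h(λ)`. -/
theorem symmetric_harnack (h : ℂ → ℝ)
    (hharm : HarmonicOnSet h (Metric.ball (0 : ℂ) 1))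
    (hpos : ∀ z ∈ Metric.ball (0 : ℂ) 1, 0 < h z)
    (lam : ℂ) (hlam : lam ∈ Metric.ball (0 : ℂ) 1)
    (hder : fderiv ℝ h 0 lam = 0) :
    (1 - ‖lam‖ ^ 2) / (1 + ‖lam‖ ^ 2) * h lam ≤ h 0 ∧
      h 0 ≤ (1 + ‖lam‖ ^ 2) / (1 - ‖lam‖ ^ 2) * h lam := by
  simpa [hder] using symmetric_harnack_general (hharm.harmonicOnNhd isOpen_ball)
    (fun z hz ↦ (hpos z hz).le) hlam
end

section
/- Let g be a holomorphic function on the open unit disc D ⊂ ℂ with Re g(z) > 0 for all z ∈ D, g(0) = 1, and g'(0) = 0. Then for every λ ∈ D one has (1−|λ|²)/(1+|λ|²) ≤ Re g(λ) ≤ (1+|λ|²)/(1−|λ|²). -/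
/-! The Cayley transform `w ↦ (w - a) / (w + conj a)` carries the right half-plane into the unit
disc and `a = g c` to `0`. Composed with `g` it vanishes at `c` to the same order as `g - g c`, so
the Schwarz lemma bounds it by a power of `dist z c / R`. The points whose transform has modulus at
most `q` form a Euclidean disc in the half-plane; its real extent gives both bounds. -/

open Asymptotics Metric Topology
open scoped ComplexConjugate

/-- The Cayley transform of the right half-plane onto the unit disc, normalized to send the base
point `a` to `0`; it is meant for `0 < a.re` and `0 ≤ w.re`, where the denominator is nonzero. -/
noncomputable def cayley (a w : ℂ) : ℂ := (w - a) / (w + conj a)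

section Cayley

variable {a w : ℂ} {q : ℝ}

@[simp]
theorem cayley_self (a : ℂ) : cayley a a = 0 := by simp [cayley]

theorem add_conj_ne_zero_of_re_pos (ha : 0 < a.re) (hw : 0 ≤ w.re) : w + conj a ≠ 0 := by
  intro h
  have hsum : w.re + a.re = 0 := by simpa using congrArg Complex.re h
  linarith

theorem differentiableAt_cayley (ha : 0 < a.re) (hw : 0 ≤ w.re) :
    DifferentiableAt ℂ (cayley a) w :=
  (differentiableAt_id.sub_const a).div (differentiableAt_id.add_const (conj a))
    (add_conj_ne_zero_of_re_pos ha hw)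

theorem sq_norm_sub_eq_re_im (a w : ℂ) :
    ‖w - a‖ ^ 2 = (w.re - a.re) ^ 2 + (w.im - a.im) ^ 2 := by
  rw [Complex.sq_norm, Complex.normSq_apply, Complex.sub_re, Complex.sub_im, sq, sq]

theorem sq_norm_add_conj_eq_re_im (a w : ℂ) :
    ‖w + conj a‖ ^ 2 = (w.re + a.re) ^ 2 + (w.im - a.im) ^ 2 := by
  rw [Complex.sq_norm, Complex.normSq_apply, Complex.add_re, Complex.add_im, Complex.conj_re,
    Complex.conj_im, ← sub_eq_add_neg, sq, sq]

theorem norm_cayley_le_one (ha : 0 ≤ a.re) (hw : 0 ≤ w.re) : ‖cayley a w‖ ≤ 1 := by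
  rw [cayley, norm_div]
  refine div_le_one_of_le₀ (le_of_sq_le_sq ?_ (norm_nonneg _)) (norm_nonneg _)
  rw [sq_norm_sub_eq_re_im, sq_norm_add_conj_eq_re_im]
  linarith [mul_nonneg ha hw]

theorem abs_re_sub_le_of_norm_cayley_le (ha : 0 < a.re) (hw : 0 ≤ w.re) (hq : q ≤ 1)
    (h : ‖cayley a w‖ ≤ q) : |w.re - a.re| ≤ q * (w.re + a.re) := by
  have hq₀ : 0 ≤ q := (norm_nonneg _).trans h
  have hnorm : ‖w - a‖ ≤ q * ‖w + conj a‖ := by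
    rwa [cayley, norm_div, div_le_iff₀ (norm_pos_iff.2 (add_conj_ne_zero_of_re_pos ha hw))] at h
  refine abs_le_of_sq_le_sq ?_ (by positivity)
  have hq_im : q ^ 2 * (w.im - a.im) ^ 2 ≤ (w.im - a.im) ^ 2 :=
    mul_le_of_le_one_left (sq_nonneg _) (pow_le_one₀ hq₀ hq)
  have hsq := pow_le_pow_left₀ (norm_nonneg _) hnorm 2
  rw [mul_pow, sq_norm_sub_eq_re_im, sq_norm_add_conj_eq_re_im] at hsq
  linarith

theorem re_bounds_of_norm_cayley_le (ha : 0 < a.re) (hw : 0 ≤ w.re) (hq : q < 1)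
    (h : ‖cayley a w‖ ≤ q) :
    a.re * ((1 - q) / (1 + q)) ≤ w.re ∧ w.re ≤ a.re * ((1 + q) / (1 - q)) := by
  have hq₀ : 0 ≤ q := (norm_nonneg _).trans h
  obtain ⟨hlower, hupper⟩ := abs_le.1 (abs_re_sub_le_of_norm_cayley_le ha hw hq.le h)
  rw [← mul_div_assoc, ← mul_div_assoc, div_le_iff₀ (by linarith), le_div_iff₀ (by linarith)]
  constructor <;> linarith

end Cayley

theorem isLittleO_sub_of_deriv_eq_zero {𝕜 F : Type*} [NontriviallyNormedField 𝕜]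
    [NormedAddCommGroup F] [NormedSpace 𝕜 F] {f : 𝕜 → F} {x : 𝕜} (hf : DifferentiableAt 𝕜 f x)
    (hderiv : deriv f x = 0) : (f · - f x) =o[𝓝 x] (· - x) := by
  simpa [hderiv] using hasDerivAt_iff_isLittleO.1 hf.hasDerivAt

section Harnack

variable {E : Type*} [NormedAddCommGroup E] [NormedSpace ℂ E]
  {g : E → ℂ} {c z : E} {R : ℝ} {n : ℕ}

theorem norm_cayley_le_div_pow (hg : DifferentiableOn ℂ g (ball c R))
    (hre : ∀ w ∈ ball c R, 0 < (g w).re) (hn : (g · - g c) =o[𝓝 c] (‖· - c‖ ^ n))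
    (hz : z ∈ ball c R) : ‖cayley (g c) (g z)‖ ≤ (dist z c / R) ^ (n + 1) := by
  have hc : c ∈ ball c R := mem_ball_self (pos_of_mem_ball hz)
  have hdiff : DifferentiableOn ℂ (cayley (g c) ∘ g) (ball c R) := fun w hw =>
    (differentiableAt_cayley (hre c hc) (hre w hw).le).comp_differentiableWithinAt w (hg w hw)
  have hmaps : Set.MapsTo (cayley (g c) ∘ g) (ball c R)
      (closedBall ((cayley (g c) ∘ g) c) 1) := fun w hw => by
    simpa using norm_cayley_le_one (hre c hc).le (hre w hw).le
  have hcont : ContinuousAt g c := hg.continuousOn.continuousAt (isOpen_ball.mem_nhds hc)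
  have horder : ((cayley (g c) ∘ g) · - (cayley (g c) ∘ g) c) =o[𝓝 c] (‖· - c‖ ^ n) :=
    ((differentiableAt_cayley (hre c hc) (hre c hc).le).isBigO_sub.comp_tendsto
      hcont).trans_isLittleO hn
  simpa using Complex.dist_le_mul_div_pow_of_mapsTo_ball_of_isLittleO hdiff hmaps horder hz

theorem symmetric_harnack_holomorphic_general (hg : DifferentiableOn ℂ g (ball c R))
    (hre : ∀ w ∈ ball c R, 0 < (g w).re) (hn : (g · - g c) =o[𝓝 c] (‖· - c‖ ^ n))
    (hz : z ∈ ball c R) :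
    (g c).re * ((1 - (dist z c / R) ^ (n + 1)) / (1 + (dist z c / R) ^ (n + 1))) ≤ (g z).re ∧
      (g z).re ≤ (g c).re * ((1 + (dist z c / R) ^ (n + 1)) / (1 - (dist z c / R) ^ (n + 1))) := by
  have hR : 0 < R := pos_of_mem_ball hz
  have hlt : (dist z c / R) ^ (n + 1) < 1 :=
    pow_lt_one₀ (by positivity) ((div_lt_one hR).2 hz) n.succ_ne_zero
  exact re_bounds_of_norm_cayley_le (hre c (mem_ball_self hR)) (hre z hz).le hlt
    (norm_cayley_le_div_pow hg hre hn hz)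

end Harnack

/-- **Holomorphic formulation of the symmetric Harnack inequality.** If `g` is holomorphic
on the unit disc with positive real part, `g(0) = 1` and `g'(0) = 0`, then
`(1−|λ|²)/(1+|λ|²) ≤ Re g(λ) ≤ (1+|λ|²)/(1−|λ|²)` for every `λ` in the disc. -/
theorem symmetric_harnack_holomorphic (g : ℂ → ℂ)
    (hg : ∀ z ∈ Metric.ball (0 : ℂ) 1, DifferentiableAt ℂ g z)
    (hre : ∀ z ∈ Metric.ball (0 : ℂ) 1, 0 < (g z).re)
    (hg0 : g 0 = 1)
    (hg'0 : deriv g 0 = 0) :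
    ∀ lam ∈ Metric.ball (0 : ℂ) 1,
      (1 - ‖lam‖ ^ 2) / (1 + ‖lam‖ ^ 2) ≤ (g lam).re ∧
        (g lam).re ≤ (1 + ‖lam‖ ^ 2) / (1 - ‖lam‖ ^ 2) := by
  have hn : (g · - g 0) =o[𝓝 0] (‖· - 0‖ ^ 1) := by
    simpa using (isLittleO_sub_of_deriv_eq_zero (hg 0 (by simp)) hg'0).norm_right
  intro lam hlam
  simpa [hg0] using symmetric_harnack_holomorphic_general
    (fun z hz => (hg z hz).differentiableWithinAt) hre hn hlam
end

section
/- Let 0 < ρ < 1, 0 ≤ k < ρ, C > 0, n ≥ 1, and let ν₁,…,νₙ be strictly positive reals with Σⱼ νⱼ = 1. Let r₁,…,rₙ be holomorphic nonvanishing functions on ρD = {λ ∈ ℂ : |λ| < ρ} satisfying |rⱼ(x)| = |rⱼ(−x)| for every real x with |x| < ρ, Σⱼ |rⱼ(λ)|² ≤ C³ for every λ ∈ ρD, and Σⱼ |rⱼ(0)| ≤ 1. Then, with Iᵥ := −Σⱼ νⱼ log νⱼ and Λᵥ(λ) := −Σⱼ νⱼ log|rⱼ(λ)|, one has Iᵥ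 − (1 + k²/ρ²)·Λᵥ(k) ≤ 3·(k²/ρ²)·log C. -/
open Finset

/-! For a weight vector `ν`, set `H = 2 Λ - I + log B`, where `I` is the entropy of `ν`, `Λ` its
Lyapunov exponent and `B` bounds `∑ j, ‖r j‖ ^ 2` on the disc. Since the `r j` have no zeros, `H` is
harmonic. Gibbs' inequality, applied to the `‖r j z‖ ^ 2` and then to the `‖r j 0‖`, gives `0 ≤ H`
and `I + log B ≤ H 0`. For a nonnegative harmonic function, Harnack's lower bound can be improved
for the mean over a pair of antipodal points, because the arithmetic mean of the two Poisson kernels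
dominates their harmonic mean, which by the parallelogram law is constant on the circle. This
symmetric Harnack inequality, applied to `H` at `k` and `-k`, where `Λ` agrees, is the estimate. -/

section Gibbs

variable {ι : Type*} [Fintype ι]

/-- The Shannon entropy of a weight vector, in nats; zero weights contribute nothing, since
`Real.log 0 = 0`. -/
noncomputable def entropy (ν : ι → ℝ) : ℝ :=
  -∑ j, ν j * Real.log (ν j)

theorem sum_mul_log_add_entropy_le_log_sum {ν p : ι → ℝ} (hν : ∀ j, 0 ≤ ν j)
    (hsum : ∑ j, ν j = 1) (hp : ∀ j, 0 < p j) :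
    ∑ j, ν j * Real.log (p j) + entropy ν ≤ Real.log (∑ j, p j) := by
  have hι : (univ : Finset ι).Nonempty := nonempty_of_sum_ne_zero (hsum ▸ one_ne_zero)
  have hS : 0 < ∑ j, p j := sum_pos (fun j _ => hp j) hι
  set S := ∑ j, p j
  have hterm (j : ι) : ν j * Real.log (p j) - ν j * Real.log (ν j) ≤
      p j / S - ν j + ν j * Real.log S := by
    obtain hj | hj := (hν j).eq_or_lt
    · simpa [← hj] using div_nonneg (hp j).le hS.le
    · have hlog : Real.log (p j / (ν j * S)) ≤ p j / (ν j * S) - 1 :=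
        Real.log_le_sub_one_of_pos (div_pos (hp j) (mul_pos hj hS))
      rw [Real.log_div (hp j).ne' (mul_pos hj hS).ne', Real.log_mul hj.ne' hS.ne'] at hlog
      calc ν j * Real.log (p j) - ν j * Real.log (ν j)
          = ν j * (Real.log (p j) - (Real.log (ν j) + Real.log S)) + ν j * Real.log S := by ring
        _ ≤ ν j * (p j / (ν j * S) - 1) + ν j * Real.log S := by gcongr
        _ = p j / S - ν j + ν j * Real.log S := by field_simp
  calc ∑ j, ν j * Real.log (p j) + entropy ν
      = ∑ j, (ν j * Real.log (p j) - ν j * Real.log (ν j)) := by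
        rw [sum_sub_distrib, entropy, sub_eq_add_neg]
    _ ≤ ∑ j, (p j / S - ν j + ν j * Real.log S) := sum_le_sum fun j _ => hterm j
    _ = Real.log S := by
        rw [sum_add_distrib, sum_sub_distrib, ← sum_div, ← sum_mul, hsum, div_self hS.ne']
        ring

end Gibbs

section LyapunovExponent

variable {ι X E : Type*} [Fintype ι]

/-- The Lyapunov exponent at `z` of the weights `ν` with respect to the family `r`. The junk value
`Real.log 0 = 0` enters where some `r j z` vanishes. -/
noncomputable def lyapunovExponent [Norm E] (ν : ι → ℝ) (r : ι → X → E) (z : X) : ℝ :=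
  -∑ j, ν j * Real.log ‖r j z‖

variable [NormedAddCommGroup E] {ν : ι → ℝ} {r : ι → X → E} {z : X}

theorem entropy_sub_log_le_mul_lyapunovExponent (hν : ∀ j, 0 ≤ ν j) (hsum : ∑ j, ν j = 1)
    (hr : ∀ j, r j z ≠ 0) (m : ℕ) {B : ℝ} (hB : ∑ j, ‖r j z‖ ^ m ≤ B) :
    entropy ν - Real.log B ≤ m * lyapunovExponent ν r z := by
  have hpos (j : ι) : 0 < ‖r j z‖ ^ m := pow_pos (norm_pos_iff.2 (hr j)) m
  have hι : (univ : Finset ι).Nonempty := nonempty_of_sum_ne_zero (hsum ▸ one_ne_zero)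
  have hgibbs := sum_mul_log_add_entropy_le_log_sum hν hsum hpos
  have hlog : Real.log (∑ j, ‖r j z‖ ^ m) ≤ Real.log B :=
    Real.log_le_log (sum_pos (fun j _ => hpos j) hι) hB
  have hexp : ∑ j, ν j * Real.log (‖r j z‖ ^ m) = -(m * lyapunovExponent ν r z) := by
    simp only [Real.log_pow, mul_left_comm _ (m : ℝ), ← mul_sum, lyapunovExponent, mul_neg, neg_neg]
  linarith

end LyapunovExponent

section SymmetricHarnack

open InnerProductSpace Metric

theorem two_mul_le_mul_poissonKernel_add_poissonKernel {c w z : ℂ} {R : ℝ} (hw : ‖w‖ < R)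
    (hz : z ∈ sphere c R) :
    2 * (R ^ 2 - ‖w‖ ^ 2) ≤
      (R ^ 2 + ‖w‖ ^ 2) * (poissonKernel c (c + w) z + poissonKernel c (c - w) z) := by
  have hzR : ‖z - c‖ = R := mem_sphere_iff_norm.1 hz
  have hsub : 0 < ‖z - c - w‖ ^ 2 := by
    have := norm_sub_norm_le (z - c) w
    exact pow_pos (by linarith) 2
  have hadd : 0 < ‖z - c + w‖ ^ 2 := by
    have := norm_sub_le_norm_add (z - c) w
    exact pow_pos (by linarith) 2
  have hpar : R ^ 2 + ‖w‖ ^ 2 = (‖z - c - w‖ ^ 2 + ‖z - c + w‖ ^ 2) / 2 := by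
    have := parallelogram_law_with_norm ℝ (z - c) w
    rw [hzR] at this
    linarith
  have hnum : 0 ≤ R ^ 2 - ‖w‖ ^ 2 := sub_nonneg.2 (pow_le_pow_left₀ (norm_nonneg w) hw.le 2)
  have ham_hm {x y : ℝ} (hx : 0 < x) (hy : 0 < y) : 4 ≤ (x + y) * (x⁻¹ + y⁻¹) := by
    field_simp
    linarith [sq_nonneg (x - y)]
  calc 2 * (R ^ 2 - ‖w‖ ^ 2) = (R ^ 2 - ‖w‖ ^ 2) / 2 * 4 := by ring
    _ ≤ (R ^ 2 - ‖w‖ ^ 2) / 2 * ((‖z - c - w‖ ^ 2 + ‖z - c + w‖ ^ 2) *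
          ((‖z - c - w‖ ^ 2)⁻¹ + (‖z - c + w‖ ^ 2)⁻¹)) := by
        gcongr
        exact ham_hm hsub hadd
    _ = (R ^ 2 + ‖w‖ ^ 2) * (poissonKernel c (c + w) z + poissonKernel c (c - w) z) := by
        rw [hpar, poissonKernel_def, poissonKernel_def, add_sub_cancel_left, sub_sub_cancel_left,
          norm_neg, sub_neg_eq_add, hzR]
        ring

theorem circleIntegrable_poissonKernel_smul {E : Type*} [NormedAddCommGroup E] [NormedSpace ℝ E]
    {f : ℂ → E} {c w : ℂ} {R : ℝ} (hf : ContinuousOn f (sphere c |R|)) (hw : w ∈ ball c R) :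
    CircleIntegrable (poissonKernel c w • f) c R := by
  refine ContinuousOn.circleIntegrable' (ContinuousOn.smul ?_ hf)
  rw [poissonKernel_eq_re_herglotzRieszKernel]
  exact Complex.continuous_re.comp_continuousOn (continuousOn_herglotzRieszKernel_sphere hw)

theorem symmetric_harnack_of_harmonicContOnCl {f : ℂ → ℝ} {c w : ℂ} {R : ℝ}
    (hf : HarmonicContOnCl f (ball c R)) (hpos : ∀ z ∈ sphere c R, 0 ≤ f z) (hw : ‖w‖ < R) :
    2 * (R ^ 2 - ‖w‖ ^ 2) * f c ≤ (R ^ 2 + ‖w‖ ^ 2) * (f (c + w) + f (c - w)) := by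
  have hR : |R| = R := abs_of_pos ((norm_nonneg w).trans_lt hw)
  have hadd : c + w ∈ ball c R := by simpa using hw
  have hsub : c - w ∈ ball c R := by simpa using hw
  have hcont : ContinuousOn f (sphere c |R|) := by
    rw [hR]
    exact hf.continuousOn_ball.mono sphere_subset_closedBall
  have hmean : Real.circleAverage f c R = f c := (hR.symm ▸ hf).circleAverage_eq
  have hint_add := circleIntegrable_poissonKernel_smul hcont hadd
  have hint_sub := circleIntegrable_poissonKernel_smul hcont hsub
  calc 2 * (R ^ 2 - ‖w‖ ^ 2) * f c
      = Real.circleAverage ((2 * (R ^ 2 - ‖w‖ ^ 2)) • f) c R := by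
        rw [Real.circleAverage_smul, hmean, smul_eq_mul]
    _ ≤ Real.circleAverage ((R ^ 2 + ‖w‖ ^ 2) •
          (poissonKernel c (c + w) • f + poissonKernel c (c - w) • f)) c R := by
        refine Real.circleAverage_mono hcont.circleIntegrable'.const_smul
          (hint_add.add hint_sub).const_smul fun z hz => ?_
        rw [hR] at hz
        simpa only [Pi.smul_apply, Pi.add_apply, Pi.mul_apply, smul_eq_mul, ← add_mul, mul_assoc]
          using mul_le_mul_of_nonneg_right
            (two_mul_le_mul_poissonKernel_add_poissonKernel hw hz) (hpos z hz)
    _ = (R ^ 2 + ‖w‖ ^ 2) * (f (c + w) + f (c - w)) := by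
        rw [Real.circleAverage_smul, Real.circleAverage_add hint_add hint_sub,
          hf.circleAverage_poissonKernel_smul hadd, hf.circleAverage_poissonKernel_smul hsub,
          smul_eq_mul]

theorem symmetric_harnack_of_harmonicOnNhd_ball {f : ℂ → ℝ} {c w : ℂ} {ρ : ℝ}
    (hf : HarmonicOnNhd f (ball c ρ)) (hpos : ∀ z ∈ ball c ρ, 0 ≤ f z) (hw : ‖w‖ < ρ) :
    2 * (ρ ^ 2 - ‖w‖ ^ 2) * f c ≤ (ρ ^ 2 + ‖w‖ ^ 2) * (f (c + w) + f (c - w)) := by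
  have hsmaller : ∀ R ∈ Set.Ioo ‖w‖ ρ,
      2 * (R ^ 2 - ‖w‖ ^ 2) * f c ≤ (R ^ 2 + ‖w‖ ^ 2) * (f (c + w) + f (c - w)) := by
    rintro R ⟨hwR, hRρ⟩
    have hball : closedBall c R ⊆ ball c ρ := closedBall_subset_ball hRρ
    exact symmetric_harnack_of_harmonicContOnCl
      (hf.mono (closure_ball_subset_closedBall.trans hball)).harmonicContOnCl
      (fun z hz => hpos z (hball (sphere_subset_closedBall hz))) hwR
  refine le_on_closure hsmaller (by fun_prop) (by fun_prop) ?_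
  rw [closure_Ioo hw.ne]
  exact Set.right_mem_Icc.2 hw.le

end SymmetricHarnack

section Harmonicity

open InnerProductSpace

theorem harmonicOnNhd_finset_sum {ι E F : Type*} [NormedAddCommGroup E] [InnerProductSpace ℝ E]
    [FiniteDimensional ℝ E] [NormedAddCommGroup F] [NormedSpace ℝ F] {f : ι → E → F} {U : Set E}
    (s : Finset ι) (hf : ∀ i ∈ s, HarmonicOnNhd (f i) U) : HarmonicOnNhd (∑ i ∈ s, f i) U :=
  sum_induction f (HarmonicOnNhd · U) (fun _ _ => HarmonicOnNhd.add) (harmonicOnNhd_const 0) hf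

theorem harmonicOnNhd_lyapunovExponent {ι : Type*} [Fintype ι] (ν : ι → ℝ) {r : ι → ℂ → ℂ}
    {U : Set ℂ} (hr : ∀ j, AnalyticOnNhd ℂ (r j) U) (hne : ∀ j, ∀ z ∈ U, r j z ≠ 0) :
    HarmonicOnNhd (lyapunovExponent ν r) U := by
  have hlog (j : ι) : HarmonicOnNhd (ν j • fun z => Real.log ‖r j z‖) U :=
    HarmonicOnNhd.const_smul fun z hz => (hr j z hz).harmonicAt_log_norm (hne j z hz)
  convert (harmonicOnNhd_finset_sum univ fun j _ => hlog j).neg using 1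
  ext z
  simp only [lyapunovExponent, Pi.neg_apply, Finset.sum_apply, Pi.smul_apply, smul_eq_mul]

end Harmonicity

theorem per_measure_estimate_general {ι : Type*} [Fintype ι] {ρ B : ℝ} {a : ℂ} (ha : ‖a‖ < ρ)
    {ν : ι → ℝ} (hν : ∀ j, 0 ≤ ν j) (hsum : ∑ j, ν j = 1) {r : ι → ℂ → ℂ}
    (hdiff : ∀ j, DifferentiableOn ℂ (r j) (Metric.ball 0 ρ))
    (hne : ∀ j, ∀ z ∈ Metric.ball (0 : ℂ) ρ, r j z ≠ 0)
    (hbound : ∀ z ∈ Metric.ball (0 : ℂ) ρ, ∑ j, ‖r j z‖ ^ 2 ≤ B) (h0 : ∑ j, ‖r j 0‖ ≤ 1) :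
    entropy ν - (1 + ‖a‖ ^ 2 / ρ ^ 2) *
        ((lyapunovExponent ν r a + lyapunovExponent ν r (-a)) / 2) ≤
      ‖a‖ ^ 2 / ρ ^ 2 * Real.log B := by
  have hρ : 0 < ρ := (norm_nonneg a).trans_lt ha
  let H : ℂ → ℝ := fun z => (2 : ℝ) • lyapunovExponent ν r z - (entropy ν - Real.log B)
  have hharm : InnerProductSpace.HarmonicOnNhd H (Metric.ball 0 ρ) :=
    (harmonicOnNhd_lyapunovExponent ν (fun j => (hdiff j).analyticOnNhd Metric.isOpen_ball)
      hne).const_smul.sub (InnerProductSpace.harmonicOnNhd_const _)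
  have hpos : ∀ z ∈ Metric.ball (0 : ℂ) ρ, 0 ≤ H z := fun z hz => sub_nonneg.2 <| by
    simpa using entropy_sub_log_le_mul_lyapunovExponent hν hsum (hne · z hz) 2 (hbound z hz)
  have hzero : entropy ν ≤ lyapunovExponent ν r 0 := by
    have := entropy_sub_log_le_mul_lyapunovExponent hν hsum (B := 1)
      (hne · 0 (Metric.mem_ball_self hρ)) 1 (by simpa only [pow_one] using h0)
    simpa only [Real.log_one, sub_zero, Nat.cast_one, one_mul] using this
  have hharnack := symmetric_harnack_of_harmonicOnNhd_ball hharm hpos ha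
  have hgap : 0 ≤ ρ ^ 2 - ‖a‖ ^ 2 := sub_nonneg.2 (pow_le_pow_left₀ (norm_nonneg a) ha.le 2)
  have hcenter := mul_le_mul_of_nonneg_left hzero hgap
  simp only [H, zero_add, zero_sub, smul_eq_mul] at hharnack
  field_simp
  linarith

/-- **Per-measure estimate in the dimension bound.** For holomorphic nonvanishing
functions `r₁,…,rₙ` on `ρ𝔻` with `|rⱼ(x)| = |rⱼ(−x)|` for real `x`,
`Σⱼ |rⱼ(λ)|² ≤ C³`, `Σⱼ |rⱼ(0)| ≤ 1`, and any strictly positive probability vector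
`ν`, the entropy `Iᵥ = −Σⱼ νⱼ log νⱼ` and Lyapunov exponent
`Λᵥ(λ) = −Σⱼ νⱼ log |rⱼ(λ)|` satisfy
`Iᵥ − (1 + k²/ρ²) Λᵥ(k) ≤ 3 (k²/ρ²) log C`. -/
theorem per_measure_estimate (ρ k C : ℝ) (hρ0 : 0 < ρ) (hρ1 : ρ < 1)
    (hk0 : 0 ≤ k) (hkρ : k < ρ) (hC : 0 < C)
    (n : ℕ) (hn : 1 ≤ n)
    (ν : Fin n → ℝ) (hν : ∀ j, 0 < ν j) (hsum : ∑ j, ν j = 1)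
    (r : Fin n → ℂ → ℂ)
    (hdiff : ∀ j, ∀ z ∈ Metric.ball (0 : ℂ) ρ, DifferentiableAt ℂ (r j) z)
    (hne : ∀ j, ∀ z ∈ Metric.ball (0 : ℂ) ρ, r j z ≠ 0)
    (hsymm : ∀ j, ∀ x : ℝ, |x| < ρ →
      ‖r j (x : ℂ)‖ = ‖r j (-x : ℂ)‖)
    (hbound : ∀ lam ∈ Metric.ball (0 : ℂ) ρ, ∑ j, ‖r j lam‖ ^ 2 ≤ C ^ 3)
    (h0 : ∑ j, ‖r j 0‖ ≤ 1) :
    (-∑ j, ν j * Real.log (ν j)) -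
        (1 + k ^ 2 / ρ ^ 2) * (-∑ j, ν j * Real.log (‖r j (k : ℂ)‖)) ≤
      3 * (k ^ 2 / ρ ^ 2) * Real.log C := by
  have hnorm : ‖(k : ℂ)‖ = k := Complex.norm_of_nonneg hk0
  have heven : lyapunovExponent ν r (-k) = lyapunovExponent ν r k := by
    simp only [lyapunovExponent, hsymm _ k (by rwa [abs_of_nonneg hk0])]
  have h := per_measure_estimate_general (hnorm.trans_lt hkρ) (fun j => (hν j).le) hsum
    (fun j z hz => (hdiff j z hz).differentiableWithinAt) hne hbound h0
  rw [hnorm, heven, add_self_div_two, Real.log_pow, Nat.cast_ofNat, ← mul_assoc,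
    mul_comm _ (3 : ℝ)] at h
  exact h
end
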